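/- arXiv:math/0701748 — 5 statements merged into one kernel-verified Lean document; each statement's English description precedes it below -/
import Mathlib

section
/- The conjugates a⁻ᵏbaᵏ, k ∈ ℤ, generate a free abelian group of infinite rank: they pairwise commute, and the group homomorphism from the direct sum ⨁_{k∈ℤ} ℤ into the group of homeomorphisms of [0,1] sending a finitely supported family (mₖ) to the product ∏ₖ (a⁻ᵏbaᵏ)^{mₖ} is injective. -/
/-!
The map `b` is supported in the open interval `(1/2, 7/8)` (`b_eq_self`), and `a = x₀²` carries
`[1/2, ∞)` into `[7/8, ∞)`, so distinct `a`-translates of this interval are disjoint.  Hence the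
conjugates `c k` have pairwise disjoint supports (`disjoint_c`), and in particular they commute and
induce a homomorphism from the free abelian group (`exists_hom_of_commute`).

For injectivity, evaluate at the point `x₀²ᵏ (3/4)`: the conjugates `c j` with `j ≠ k` fix it, so the
image of `m` moves it exactly as `(c k) ^ (m k)` does (`hom_apply`), that is, as `b ^ (m k)` moves `3/4`.  Since
`b` is strictly increasing and `b (3/4) > 3/4`, no nontrivial power of `b` fixes `3/4`
(`b_zpow_ne`), and every coordinate `m k` of an element of the kernel is zero.
-/

noncomputable section
set_option maxHeartbeats 2000000


/-- The underlying function of Thompson's generator `x₀`, extended by the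
identity outside `[0,1]`. -/
def x0fun : ℝ → ℝ := fun α =>
  if α < 0 then α
  else if α ≤ 1/4 then 2*α
  else if α ≤ 1/2 then α + 1/4
  else if α ≤ 1 then α/2 + 1/2
  else α

/-- The inverse of `x0fun`. -/
def x0inv : ℝ → ℝ := fun α =>
  if α < 0 then α
  else if α ≤ 1/2 then α/2
  else if α ≤ 3/4 then α - 1/4
  else if α ≤ 1 then 2*α - 1
  else α

/-- Thompson's generator `x₀`, as a permutation of `ℝ` which is the identity
outside `[0,1]`:  `x₀ α = 2α` on `[0,1/4]`, `α + 1/4` on `[1/4,1/2]`,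
`α/2 + 1/2` on `[1/2,1]`. -/
def x₀ : Equiv.Perm ℝ where
  toFun := x0fun
  invFun := x0inv
  left_inv := by
    intro x
    simp only [x0fun, x0inv]
    split_ifs <;> linarith
  right_inv := by
    intro x
    simp only [x0fun, x0inv]
    split_ifs <;> linarith

/-- The underlying function of Thompson's generator `x₁`, extended by the
identity outside `[0,1]`. -/
def x1fun : ℝ → ℝ := fun α =>
  if α ≤ 1/2 then α
  else if α ≤ 5/8 then 2*α - 1/2
  else if α ≤ 3/4 then α + 1/8
  else if α ≤ 1 then α/2 + 1/2
  else α

/-- The inverse of `x1fun`. -/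
def x1inv : ℝ → ℝ := fun α =>
  if α ≤ 1/2 then α
  else if α ≤ 3/4 then α/2 + 1/4
  else if α ≤ 7/8 then α - 1/8
  else if α ≤ 1 then 2*α - 1
  else α

/-- Thompson's generator `x₁`, as a permutation of `ℝ` which is the identity
outside `[0,1]`:  `x₁ α = α` on `[0,1/2]`, `2α - 1/2` on `[1/2,5/8]`,
`α + 1/8` on `[5/8,3/4]`, and on `[3/4,1]` the affine map of slope `1/2`
fixing `1` (written `α/2 + 3/4` in the source, an evident typo for
`α/2 + 1/2`, the unique slope-`1/2` affine map with `3/4 ↦ 7/8`, `1 ↦ 1`). -/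
def x₁ : Equiv.Perm ℝ where
  toFun := x1fun
  invFun := x1inv
  left_inv := by
    intro x
    simp only [x1fun, x1inv]
    split_ifs <;> linarith
  right_inv := by
    intro x
    simp only [x1fun, x1inv]
    split_ifs <;> linarith

/-- `x₂ = x₀⁻¹ x₁ x₀` (maps written on the right), i.e. the map
`α ↦ x₀ (x₁ (x₀⁻¹ α))`; in terms of composition this is `x₀ * x₁ * x₀⁻¹`. -/
def x₂ : Equiv.Perm ℝ := x₀ * x₁ * x₀⁻¹

/-- `b = x₁ x₂⁻¹` (maps written on the right), i.e. the map `α ↦ x₂⁻¹ (x₁ α)`. -/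
def b : Equiv.Perm ℝ := x₂⁻¹ * x₁

/-- `a = x₀²`. -/
def a : Equiv.Perm ℝ := x₀ ^ 2

/-- The conjugate `a⁻ᵏ b aᵏ` (maps written on the right), i.e. the map
`α ↦ x₀²ᵏ (b (x₀⁻²ᵏ α))`. -/
def c (k : ℤ) : Equiv.Perm ℝ := x₀ ^ (2*k) * b * x₀ ^ (-(2*k))

/-! ### The map `b`: monotonicity and support -/

lemma strictMono_x0fun : StrictMono x0fun := by
  intro x y h
  simp only [x0fun]
  split_ifs <;> linarith

lemma strictMono_x0inv : StrictMono x0inv := by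
  intro x y h
  simp only [x0inv]
  split_ifs <;> linarith

lemma strictMono_x1fun : StrictMono x1fun := by
  intro x y h
  simp only [x1fun]
  split_ifs <;> linarith

lemma strictMono_x1inv : StrictMono x1inv := by
  intro x y h
  simp only [x1inv]
  split_ifs <;> linarith

lemma b_apply (x : ℝ) : b x = x0fun (x1inv (x0inv (x1fun x))) := rfl

lemma strictMono_b : StrictMono b := fun _ _ h =>
  strictMono_x0fun (strictMono_x1inv (strictMono_x0inv (strictMono_x1fun h)))

lemma lt_b : (3 / 4 : ℝ) < b (3 / 4) := by
  rw [b_apply]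
  norm_num [x0fun, x1fun, x0inv, x1inv]

lemma b_eq_self_of_le {x : ℝ} (h : x ≤ 1 / 2) : b x = x := by
  have h1 : x1fun x = x := by rw [x1fun]; exact if_pos h
  have h2 : x0inv x ≤ 1 / 2 := by
    simp only [x0inv]; split_ifs <;> linarith
  have h3 : x1inv (x0inv x) = x0inv x := by
    rw [x1inv]; exact if_pos h2
  rw [b_apply, h1, h3]
  exact x₀.right_inv x

lemma b_eq_self_of_ge {x : ℝ} (h : 7 / 8 ≤ x) : b x = x := by
  -- Near `1` both `x₁` and `x₂` are the affine map of slope `1/2` fixing `1`, so they cancel.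
  rw [b_apply]
  by_cases h1 : x ≤ 1
  · have e1 : x1fun x = x / 2 + 1 / 2 := by
      simp only [x1fun]; split_ifs <;> linarith
    have e2 : x0inv (x / 2 + 1 / 2) = x := by
      simp only [x0inv]; split_ifs <;> linarith
    have e3 : x1inv x = 2 * x - 1 := by
      simp only [x1inv]; split_ifs <;> linarith
    rw [e1, e2, e3]
    simp only [x0fun]; split_ifs <;> linarith
  · have e1 : x1fun x = x := by
      simp only [x1fun]; split_ifs <;> first | rfl | linarith
    have e2 : x0inv x = x := by
      simp only [x0inv]; split_ifs <;> first | rfl | linarith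
    have e3 : x1inv x = x := by
      simp only [x1inv]; split_ifs <;> first | rfl | linarith
    rw [e1, e2, e3]
    simp only [x0fun]; split_ifs <;> first | rfl | linarith

/-- The support of `b` lies in `(1/2, 7/8)`. -/
lemma b_eq_self {x : ℝ} (h : x ∉ Set.Ioo (1 / 2 : ℝ) (7 / 8)) : b x = x := by
  rcases le_or_gt x (1 / 2) with h1 | h1
  · exact b_eq_self_of_le h1
  · exact b_eq_self_of_ge (not_lt.1 fun h2 => h ⟨h1, h2⟩)

/-! ### Disjointness of the supports of the conjugates -/

lemma le_x0_sq {x : ℝ} (h : 1 / 2 ≤ x) : 7 / 8 ≤ (x₀ ^ 2) x := by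
  have key : ∀ y c : ℝ, c ≤ y → x0fun c ≤ x0fun y := fun y c h => strictMono_x0fun.monotone h
  have h1 : x0fun (1 / 2) = 3 / 4 := by norm_num [x0fun]
  have h2 : x0fun (3 / 4) = 7 / 8 := by norm_num [x0fun]
  change 7 / 8 ≤ x0fun (x0fun x)
  rw [← h2]
  apply key
  rw [← h1]
  exact key _ _ h

/-- Positive powers of `a` push `[1/2, 7/8)` off itself to the right. -/
lemma le_x0_pow {x : ℝ} (h : 1 / 2 ≤ x) (n : ℕ) : 7 / 8 ≤ ((x₀ ^ 2) ^ (n + 1)) x := by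
  induction n with
  | zero => simpa using le_x0_sq h
  | succ n ih =>
    rw [pow_succ', Equiv.Perm.mul_apply]
    exact le_x0_sq (by linarith)

lemma c_eq (k : ℤ) : c k = x₀ ^ (2 * k) * b * (x₀ ^ (2 * k))⁻¹ := by
  rw [c, zpow_neg]

lemma c_ne_self {k : ℤ} {x : ℝ} (h : c k x ≠ x) :
    (x₀ ^ (2 * k))⁻¹ x ∈ Set.Ioo (1 / 2 : ℝ) (7 / 8) := by
  by_contra h1
  apply h
  rw [c_eq, Equiv.Perm.mul_apply, Equiv.Perm.mul_apply, b_eq_self h1, ← Equiv.Perm.mul_apply,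
    mul_inv_cancel, Equiv.Perm.one_apply]

lemma disjoint_c_of_lt {j k : ℤ} (h : j < k) : (c j).Disjoint (c k) := by
  intro x
  by_contra! hx
  have hj := c_ne_self hx.1
  have hk := c_ne_self hx.2
  obtain ⟨n, hn⟩ := Int.eq_ofNat_of_zero_le (show 0 ≤ k - j - 1 by omega)
  have e : (x₀ ^ (2 * j))⁻¹ = (x₀ ^ 2) ^ (n + 1) * (x₀ ^ (2 * k))⁻¹ := by
    rw [← zpow_neg, ← zpow_neg, ← pow_mul, ← zpow_natCast, ← zpow_add]
    congr 1
    push_cast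
    omega
  rw [e, Equiv.Perm.mul_apply] at hj
  exact absurd hj.2 (not_lt.2 (le_x0_pow hk.1.le n))

lemma disjoint_c {j k : ℤ} (h : j ≠ k) : (c j).Disjoint (c k) := by
  rcases lt_or_gt_of_ne h with h | h
  · exact disjoint_c_of_lt h
  · exact (disjoint_c_of_lt h).symm

lemma commute_c (j k : ℤ) : Commute (c j) (c k) := by
  rcases eq_or_ne j k with rfl | h
  · exact Commute.refl _
  · exact (disjoint_c h).commute

/-! ### Nontrivial powers move a point -/

lemma lt_b_pow (n : ℕ) : (3 / 4 : ℝ) < (b ^ (n + 1)) (3 / 4) := by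
  induction n with
  | zero => simpa using lt_b
  | succ n ih =>
    rw [pow_succ', Equiv.Perm.mul_apply]
    exact lt_b.trans (strictMono_b ih)

lemma b_zpow_ne {n : ℤ} (hn : n ≠ 0) : (b ^ n) (3 / 4) ≠ 3 / 4 := by
  intro h
  obtain ⟨m, hm⟩ := Nat.exists_eq_succ_of_ne_zero (Int.natAbs_ne_zero.2 hn)
  apply (lt_b_pow m).ne'
  rcases Int.natAbs_eq n with e | e
  · rw [e, hm, zpow_natCast] at h
    exact h
  · rw [e, hm, zpow_neg, zpow_natCast, Equiv.Perm.inv_eq_iff_eq] at h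
    exact h.symm

lemma c_zpow_apply (k n : ℤ) :
    (c k ^ n) ((x₀ ^ (2 * k)) (3 / 4)) = (x₀ ^ (2 * k)) ((b ^ n) (3 / 4)) := by
  rw [c_eq, conj_zpow, ← Equiv.Perm.mul_apply, inv_mul_cancel_right, Equiv.Perm.mul_apply]

lemma c_zpow_apply_ne (k : ℤ) {n : ℤ} (hn : n ≠ 0) :
    (c k ^ n) ((x₀ ^ (2 * k)) (3 / 4)) ≠ (x₀ ^ (2 * k)) (3 / 4) := by
  rw [c_zpow_apply]
  exact fun h => b_zpow_ne hn ((x₀ ^ (2 * k)).injective h)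

lemma c_apply_of_ne {j k : ℤ} (h : j ≠ k) :
    c j ((x₀ ^ (2 * k)) (3 / 4)) = (x₀ ^ (2 * k)) (3 / 4) := by
  refine (disjoint_c h _).resolve_right ?_
  simpa using c_zpow_apply_ne k one_ne_zero

/-! ### The induced homomorphism -/

/-- The universal property of the free abelian group on `ι`, for a commuting family in a group that
need not be commutative. -/
lemma exists_hom_of_commute {ι G : Type*} [Group G] (f : ι → G)
    (hf : ∀ i j, Commute (f i) (f j)) :
    ∃ φ : Multiplicative (ι →₀ ℤ) →* G,
      ∀ i, φ (Multiplicative.ofAdd (Finsupp.single i 1)) = f i := by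
  have : IsMulCommutative (Subgroup.closure (Set.range f)) :=
    Subgroup.isMulCommutative_closure (by
      rintro _ ⟨i, rfl⟩ _ ⟨j, rfl⟩
      exact hf i j)
  let : CommGroup (Subgroup.closure (Set.range f)) :=
    { (inferInstance : Group (Subgroup.closure (Set.range f))) with mul_comm := mul_comm' }
  let g : ι → Subgroup.closure (Set.range f) :=
    fun i => ⟨f i, Subgroup.subset_closure ⟨i, rfl⟩⟩
  let ψ : (ι →₀ ℤ) →+ Additive (Subgroup.closure (Set.range f)) :=
    Finsupp.liftAddHom fun i => zmultiplesHom _ (Additive.ofMul (g i))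
  refine ⟨(Subgroup.closure (Set.range f)).subtype.comp (AddMonoidHom.toMultiplicativeLeft ψ),
    fun i => ?_⟩
  have h : ψ (Finsupp.single i 1) = Additive.ofMul (g i) := by
    simp [ψ]
  change ((ψ (Finsupp.single i 1)).toMul : G) = f i
  rw [h]
  rfl

/-- At the point `x₀²ᵏ (3/4)` only the `k`-th coordinate of `m` acts. -/
lemma hom_apply {φ : Multiplicative (ℤ →₀ ℤ) →* Equiv.Perm ℝ}
    (hφ : ∀ k : ℤ, φ (Multiplicative.ofAdd (Finsupp.single k 1)) = c k) (k : ℤ) (m : ℤ →₀ ℤ) :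
    φ (Multiplicative.ofAdd m) ((x₀ ^ (2 * k)) (3 / 4)) =
      (c k ^ m k) ((x₀ ^ (2 * k)) (3 / 4)) := by
  induction m using Finsupp.induction_linear with
  | zero => simp
  | add m n hm hn =>
    have hcomm : Commute (φ (Multiplicative.ofAdd m)) (c k ^ n k) := by
      rw [← hφ k, ← map_zpow]
      exact (Commute.all _ _).map φ
    rw [ofAdd_add, map_mul, Equiv.Perm.mul_apply, hn, ← Equiv.Perm.mul_apply, hcomm.eq,
      Equiv.Perm.mul_apply, hm, ← Equiv.Perm.mul_apply, ← zpow_add, Finsupp.add_apply, add_comm]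
  | single j n =>
    have h : Finsupp.single j n = n • Finsupp.single j (1 : ℤ) := by simp
    have h1 : φ (Multiplicative.ofAdd (Finsupp.single j n)) = c j ^ n := by
      rw [h, ofAdd_zsmul, map_zpow, hφ]
    rw [h1]
    rcases eq_or_ne j k with rfl | hjk
    · rw [Finsupp.single_eq_same]
    · rw [Finsupp.single_eq_of_ne (Ne.symm hjk), zpow_zero, Equiv.Perm.one_apply]
      exact Equiv.Perm.zpow_apply_eq_self_of_apply_eq_self (c_apply_of_ne hjk) n

/-- the conjugates `a⁻ᵏbaᵏ`, `k ∈ ℤ`, generate a free abelian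
group of infinite rank: they pairwise commute, and the group homomorphism from
the direct sum `⨁_{k∈ℤ} ℤ` (realized as `ℤ →₀ ℤ`) to the homeomorphism group
sending the `k`-th coordinate generator to `a⁻ᵏbaᵏ` (hence a finitely
supported family `(mₖ)` to `∏ₖ (a⁻ᵏbaᵏ)^{mₖ}`) is injective. -/
theorem conjugates_generate_free_abelian :
    (∀ k l : ℤ, Commute (c k) (c l)) ∧
    ∃ φ : Multiplicative (ℤ →₀ ℤ) →* Equiv.Perm ℝ,
      (∀ k : ℤ, φ (Multiplicative.ofAdd (Finsupp.single k 1)) = c k) ∧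
      Function.Injective φ := by
  refine ⟨commute_c, ?_⟩
  obtain ⟨φ, hφ⟩ := exists_hom_of_commute c commute_c
  refine ⟨φ, hφ, (injective_iff_map_eq_one φ).2 fun m hm => ?_⟩
  have h0 : m.toAdd = 0 := by
    ext k
    by_contra hk
    apply c_zpow_apply_ne k hk
    rw [← hom_apply hφ k m.toAdd, ofAdd_toAdd, hm, Equiv.Perm.one_apply]
  exact toAdd_eq_zero.1 h0
end
end

section
/- Let J = [η, μ] be a closed real interval with dyadic rational endpoints and let z ∈ PL₂(J) satisfy z(α) > α for all α ∈ (η, μ). If f, g ∈ PL₂(J) both commute with z and have the same initial slope (the same right derivative at η), then f = g. In particular, for every power of two q there is at most one map in PL₂(J) commuting with z whose initial slope is q. -/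
/-!
Two elements `f`, `g` of `PL₂([η,μ])` with the same initial slope fix `η`, so they are given by the
same affine formula near `η` (`IsPL2.exists_affine`). Commuting with `z` spreads this agreement:
if `f = g` on `[η,c)` then `f = g` on `z([η,c)) = [η, z c)`, since `f (z x) = z (f x)`. As
`z c > c` for `η < c < μ`, the supremum of the `x` with `f = g` on `[η,x]` is `μ`;
and both maps fix `μ`.
-/

noncomputable section
set_option maxHeartbeats 2000000

/-- A real number is dyadic rational if it is of the form `m / 2^s`. -/
def IsDyadic (x : ℝ) : Prop := ∃ m : ℤ, ∃ s : ℕ, x = (m : ℝ) / 2 ^ s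

/-- `IsPL2 η μ f` says that (the restriction to `[η,μ]` of) `f` belongs to
`PL₂([η,μ])`: it is an order-preserving bijection of `[η,μ]` which is piecewise
affine with finitely many breakpoints, all at dyadic rationals, and with all
slopes integer powers of `2`. -/
def IsPL2 (η μ : ℝ) (f : ℝ → ℝ) : Prop :=
  Set.BijOn f (Set.Icc η μ) (Set.Icc η μ) ∧
  StrictMonoOn f (Set.Icc η μ) ∧
  ∃ n : ℕ, 0 < n ∧ ∃ t : ℕ → ℝ,
    t 0 = η ∧ t n = μ ∧
    (∀ i, i < n → t i < t (i + 1)) ∧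
    (∀ i, i ≤ n → IsDyadic (t i)) ∧
    (∀ i, i < n → ∃ s : ℤ, ∃ v : ℝ, ∀ x ∈ Set.Icc (t i) (t (i + 1)),
      f x = 2 ^ s * x + v)

lemma IsPL2.map_left {η μ : ℝ} {f : ℝ → ℝ} (hf : IsPL2 η μ f) (h : η ≤ μ) : f η = η := by
  obtain ⟨⟨hm, -, hs⟩, hmono, -⟩ := hf
  have hl : η ∈ Set.Icc η μ := Set.left_mem_Icc.2 h
  obtain ⟨x, hx, hfx⟩ := hs hl
  exact le_antisymm (hfx ▸ hmono.monotoneOn hl hx hx.1) (hm hl).1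

lemma IsPL2.map_right {η μ : ℝ} {f : ℝ → ℝ} (hf : IsPL2 η μ f) (h : η ≤ μ) : f μ = μ := by
  obtain ⟨⟨hm, -, hs⟩, hmono, -⟩ := hf
  have hr : μ ∈ Set.Icc η μ := Set.right_mem_Icc.2 h
  obtain ⟨x, hx, hfx⟩ := hs hr
  have := hmono.monotoneOn hx hr hx.2
  exact le_antisymm (hm hr).2 (by linarith)

/-- Near the left endpoint, an element of `PL₂([η,μ])` is determined by its initial slope. -/
lemma IsPL2.exists_affine {η μ q : ℝ} {f : ℝ → ℝ} (hf : IsPL2 η μ f) (h : η ≤ μ)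
    (hq : HasDerivWithinAt f q (Set.Ici η) η) :
    ∃ t, η < t ∧ ∀ x ∈ Set.Icc η t, f x = η + q * (x - η) := by
  have hfix := hf.map_left h
  obtain ⟨-, -, n, hn, t, h0, -, hlt, -, haff⟩ := hf
  obtain ⟨s, v, hsv⟩ := haff 0 hn
  have ht := hlt 0 hn
  rw [zero_add, h0] at hsv ht
  have hl : η ∈ Set.Icc η (t 1) := Set.left_mem_Icc.2 ht.le
  have hd : HasDerivWithinAt f ((2 : ℝ) ^ s) (Set.Icc η (t 1)) η := by
    have h1 : HasDerivAt (fun x : ℝ => (2 : ℝ) ^ s * x + v) ((2 : ℝ) ^ s) η := by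
      simpa using ((hasDerivAt_id η).const_mul ((2 : ℝ) ^ s)).add_const v
    exact h1.hasDerivWithinAt.congr hsv (hsv η hl)
  have hqs : q = (2 : ℝ) ^ s :=
    (uniqueDiffOn_Icc ht η hl).eq_deriv _ (hq.mono Set.Icc_subset_Ici_self) hd
  refine ⟨t 1, ht, fun x hx => ?_⟩
  have h2 := hsv η hl
  rw [hsv x hx, hqs]
  linarith

/-- Kassabov–?, cf. Lemma 2.16 of Kassabov: let `J = [η,μ]` have
dyadic endpoints and let `z ∈ PL₂(J)` satisfy `z(α) > α` on `(η,μ)`.  If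
`f, g ∈ PL₂(J)` both commute with `z` and have the same initial slope (the
same right derivative at `η`), then `f = g` (on `J`).  In particular, for each
power of two `q` there is at most one element of `PL₂(J)` commuting with `z`
whose initial slope is `q`. -/
theorem unique_commuting_of_initial_slope
    (η μ : ℝ) (hη : IsDyadic η) (hμ : IsDyadic μ) (hημ : η < μ)
    (z : ℝ → ℝ) (hz : IsPL2 η μ z) (hz' : ∀ α ∈ Set.Ioo η μ, α < z α)
    (f g : ℝ → ℝ) (hf : IsPL2 η μ f) (hg : IsPL2 η μ g)
    (hfz : ∀ α ∈ Set.Icc η μ, f (z α) = z (f α))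
    (hgz : ∀ α ∈ Set.Icc η μ, g (z α) = z (g α))
    (q : ℝ)
    (hfq : HasDerivWithinAt f q (Set.Ici η) η)
    (hgq : HasDerivWithinAt g q (Set.Ici η) η) :
    Set.EqOn f g (Set.Icc η μ) := by
  obtain ⟨t₁, ht₁, hft⟩ := hf.exists_affine hημ.le hfq
  obtain ⟨t₂, ht₂, hgt⟩ := hg.exists_affine hημ.le hgq
  obtain ⟨⟨-, -, hzs⟩, hzm, -⟩ := id hz
  let A : Set ℝ := {x | x ∈ Set.Icc η μ ∧ ∀ y ∈ Set.Icc η x, f y = g y}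
  have hbdd : BddAbove A := ⟨μ, fun x hx => hx.1.2⟩
  obtain ⟨δ, hδη, hδA⟩ : ∃ δ, η < δ ∧ δ ∈ A := by
    have hδ : η < min (min t₁ t₂) μ := lt_min (lt_min ht₁ ht₂) hημ
    refine ⟨_, hδ, ⟨hδ.le, min_le_right _ _⟩, fun y hy => ?_⟩
    have hy' := (le_min_iff.1 hy.2).1
    rw [hft y ⟨hy.1, (le_min_iff.1 hy').1⟩, hgt y ⟨hy.1, (le_min_iff.1 hy').2⟩]
  have hηc : η < sSup A := hδη.trans_le (le_csSup hbdd hδA)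
  have hcμ : sSup A ≤ μ := csSup_le ⟨δ, hδA⟩ fun x hx => hx.1.2
  have hlt : ∀ y, η ≤ y → y < sSup A → f y = g y := by
    intro y hy hyc
    obtain ⟨x, hx, hyx⟩ := exists_lt_of_lt_csSup ⟨δ, hδA⟩ hyc
    exact hx.2 y ⟨hy, hyx.le⟩
  have hc : sSup A = μ := by
    refine hcμ.antisymm (not_lt.1 fun hlt' => ?_)
    have hcI : sSup A ∈ Set.Icc η μ := ⟨hηc.le, hcμ⟩
    obtain ⟨d, hcd, hdz⟩ := exists_between (hz' _ ⟨hηc, hlt'⟩)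
    have hdμ : d ≤ μ := hdz.le.trans (hz.1.mapsTo hcI).2
    refine absurd (le_csSup hbdd (a := d) ⟨⟨(hηc.trans hcd).le, hdμ⟩, ?_⟩) hcd.not_ge
    intro y hy
    obtain ⟨x, hx, rfl⟩ := hzs ⟨hy.1, hy.2.trans hdμ⟩
    have hxc : x < sSup A := (hzm.lt_iff_lt hx hcI).1 (hy.2.trans_lt hdz)
    rw [hfz x hx, hgz x hx, hlt x hx.1 hxc]
  intro x hx
  rcases hx.2.lt_or_eq with h | rfl
  · exact hlt x hx.1 (hc ▸ h)
  · rw [hf.map_right hημ.le, hg.map_right hημ.le]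
end
end

section
/- The centralizer of x₀ in the group PL₂([0,1]) consists exactly of the integer powers of x₀: a map f ∈ PL₂([0,1]) commutes with x₀ if and only if f = x₀ᵐ for some m ∈ ℤ. -/
/-!
A commuting `f` fixes `0` and is linear on a right neighbourhood of `0` with slope `2 ^ s`,
hence agrees there with `x₀ ^ s` (`x0_zpow_germ`). Since `x₀` moves every point of `(0,1)` to the
right and its only fixed points in `[0,1]` are `0` and `1`, each `α ∈ [0,1)` is `(x₀ ^ n) β` with
`β` in any prescribed neighbourhood of `0` (`exists_small_preimage`). Both `f` and `x₀ ^ s` commute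
with `x₀ ^ n`, so the equality at `β` propagates to `α`; at `1` both maps take the value `1`.
-/

noncomputable section
set_option maxHeartbeats 2000000


lemma x0_apply (x : ℝ) : x₀ x = x0fun x := rfl

lemma x0_symm_apply (x : ℝ) : x₀⁻¹ x = x0inv x := rfl

lemma x0_mem {x : ℝ} (hx : x ∈ Set.Icc (0:ℝ) 1) : x₀ x ∈ Set.Icc (0:ℝ) 1 := by
  obtain ⟨h0, h1⟩ := hx
  rw [x0_apply]
  simp only [x0fun, Set.mem_Icc]
  split_ifs <;> constructor <;> linarith

lemma x0_pow_mem {x : ℝ} (hx : x ∈ Set.Icc (0:ℝ) 1) (n : ℕ) :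
    (x₀ ^ n) x ∈ Set.Icc (0:ℝ) 1 := by
  induction n with
  | zero => simpa using hx
  | succ n ih => rw [pow_succ', Equiv.Perm.mul_apply]; exact x0_mem ih

lemma x0_of_le {x : ℝ} (h0 : 0 ≤ x) (h1 : x ≤ 1/4) : x₀ x = 2 * x := by
  rw [x0_apply]; rw [x0fun, if_neg (not_lt.2 h0), if_pos h1]

lemma x0_symm_of_le {x : ℝ} (h0 : 0 ≤ x) (h1 : x ≤ 1/2) : x₀⁻¹ x = x / 2 := by
  rw [x0_symm_apply]; rw [x0inv, if_neg (not_lt.2 h0), if_pos h1]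

/-- Every integer power `x₀ ^ s` is multiplication by `2 ^ s` near `0` on the right. -/
lemma x0_zpow_germ (s : ℤ) :
    ∃ ε : ℝ, 0 < ε ∧ ∀ y : ℝ, 0 ≤ y → y ≤ ε → (x₀ ^ s) y = 2 ^ s * y := by
  induction s using Int.induction_on with
  | zero => exact ⟨1, one_pos, fun y _ _ => by simp⟩
  | succ i ih =>
    obtain ⟨ε, hε, h⟩ := ih
    have hp : (0:ℝ) < 2 ^ (i:ℤ) := by positivity
    refine ⟨min ε ((1/4) / 2 ^ (i:ℤ)), by positivity, fun y h0 hy => ?_⟩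
    have hy2 := (le_div_iff₀ hp).1 (hy.trans (min_le_right _ _))
    rw [add_comm, zpow_add, zpow_one, Equiv.Perm.mul_apply, h y h0 (hy.trans (min_le_left _ _)),
      x0_of_le (by positivity) (by linarith), zpow_add₀ two_ne_zero, zpow_one, mul_assoc]
  | pred i ih =>
    obtain ⟨ε, hε, h⟩ := ih
    have hp : (0:ℝ) < 2 ^ (-(i:ℤ)) := by positivity
    refine ⟨min ε ((1/4) / 2 ^ (-(i:ℤ))), by positivity, fun y h0 hy => ?_⟩
    have hy2 := (le_div_iff₀ hp).1 (hy.trans (min_le_right _ _))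
    rw [sub_eq_add_neg, add_comm, zpow_add, zpow_neg_one, Equiv.Perm.mul_apply,
      h y h0 (hy.trans (min_le_left _ _)),
      x0_symm_of_le (by positivity) (by linarith), zpow_add₀ two_ne_zero, zpow_neg_one]
    ring

lemma exists_small_preimage_of_le_half {ε : ℝ} (k : ℕ) :
    ∀ α : ℝ, 0 ≤ α → α ≤ 1/2 → α ≤ ε * 2 ^ k →
      ∃ n : ℕ, ∃ β : ℝ, 0 ≤ β ∧ β ≤ ε ∧ (x₀ ^ n) β = α := by
  induction k with
  | zero => exact fun α h0 _ h => ⟨0, α, h0, by simpa using h, by simp⟩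
  | succ k ih =>
    intro α h0 h1 h
    obtain ⟨n, β, hβ0, hβ, hn⟩ := ih (α / 2) (by linarith) (by linarith)
      (by rw [pow_succ] at h; linarith)
    refine ⟨n + 1, β, hβ0, hβ, ?_⟩
    rw [pow_succ', Equiv.Perm.mul_apply, hn, x0_of_le (by linarith) (by linarith)]
    ring

/-- Near `1` the inverse of `x₀` doubles the distance to `1`, so the number `k` of steps needed to
leave `(3/4, 1)` is controlled by `1 ≤ (1 - α) * 2 ^ k`. -/
lemma exists_small_preimage_aux {ε : ℝ} (hε : 0 < ε) (k : ℕ) :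
    ∀ α : ℝ, 0 ≤ α → 1 ≤ (1 - α) * 2 ^ k →
      ∃ n : ℕ, ∃ β : ℝ, 0 ≤ β ∧ β ≤ ε ∧ (x₀ ^ n) β = α := by
  have half : ∀ α : ℝ, 0 ≤ α → α ≤ 1/2 →
      ∃ n : ℕ, ∃ β : ℝ, 0 ≤ β ∧ β ≤ ε ∧ (x₀ ^ n) β = α := by
    intro α h0 h1
    obtain ⟨k, hk⟩ := pow_unbounded_of_one_lt (α / ε) (one_lt_two (α := ℝ))
    exact exists_small_preimage_of_le_half k α h0 h1
      (by rw [div_lt_iff₀ hε] at hk; linarith)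
  induction k with
  | zero => exact fun α h0 h => half α h0 (by simp at h; linarith)
  | succ k ih =>
    intro α h0 h
    have step : ∀ γ : ℝ, x₀ γ = α → (∃ n : ℕ, ∃ β : ℝ, 0 ≤ β ∧ β ≤ ε ∧ (x₀ ^ n) β = γ) →
        ∃ n : ℕ, ∃ β : ℝ, 0 ≤ β ∧ β ≤ ε ∧ (x₀ ^ n) β = α := by
      rintro γ hγ ⟨n, β, hβ0, hβ, hn⟩
      exact ⟨n + 1, β, hβ0, hβ, by rw [pow_succ', Equiv.Perm.mul_apply, hn, hγ]⟩
    have hα1 : α < 1 := by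
      by_contra! hc
      have : (1 - α) * 2 ^ (k + 1) ≤ 0 :=
        mul_nonpos_of_nonpos_of_nonneg (by linarith) (by positivity)
      linarith
    rcases le_or_gt α (1/2) with h1 | h1
    · exact half α h0 h1
    rcases le_or_gt α (3/4) with h2 | h2
    · refine step (α - 1/4) ?_ (half _ (by linarith) (by linarith))
      rw [x0_apply]; simp only [x0fun]; split_ifs <;> linarith
    · refine step (2 * α - 1) ?_ (ih _ (by linarith) ?_)
      · rw [x0_apply]; simp only [x0fun]; split_ifs <;> linarith
      · rw [pow_succ] at h; linarith

/-- Backward orbits of `x₀` in `[0,1)` converge to `0`. -/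
lemma exists_small_preimage {ε α : ℝ} (hε : 0 < ε) (h0 : 0 ≤ α) (h1 : α < 1) :
    ∃ n : ℕ, ∃ β : ℝ, 0 ≤ β ∧ β ≤ ε ∧ (x₀ ^ n) β = α := by
  obtain ⟨k, hk⟩ := pow_unbounded_of_one_lt (1 / (1 - α)) (one_lt_two (α := ℝ))
  rw [div_lt_iff₀ (by linarith)] at hk
  exact exists_small_preimage_aux hε k α h0 (by linarith)

lemma x0_zpow_one (m : ℤ) : (x₀ ^ m) 1 = 1 :=
  Equiv.Perm.zpow_apply_eq_self_of_apply_eq_self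
    (by rw [x0_apply]; simp only [x0fun]; norm_num) m

/-- A strictly increasing self-bijection of `[0,1]` fixes the endpoints. -/
lemma endpoints_fixed {f : ℝ → ℝ} (hb : Set.BijOn f (Set.Icc 0 1) (Set.Icc 0 1))
    (hm : StrictMonoOn f (Set.Icc 0 1)) : f 0 = 0 ∧ f 1 = 1 := by
  have m0 : (0:ℝ) ∈ Set.Icc (0:ℝ) 1 := by simp
  have m1 : (1:ℝ) ∈ Set.Icc (0:ℝ) 1 := by simp
  obtain ⟨a, ha, ha'⟩ := hb.surjOn m0
  obtain ⟨b, hb1, hb'⟩ := hb.surjOn m1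
  have h1 := hm.monotoneOn m0 ha ha.1
  have h2 := hm.monotoneOn hb1 m1 hb1.2
  have h3 := hb.mapsTo m0
  have h4 := hb.mapsTo m1
  exact ⟨le_antisymm (by linarith) h3.1, le_antisymm h4.2 (by linarith)⟩

/-- the centralizer of `x₀` in `PL₂([0,1])` is exactly the set of
integer powers of `x₀`: a map `f ∈ PL₂([0,1])` commutes with `x₀` if and only
if `f = x₀ᵐ` (on `[0,1]`) for some `m ∈ ℤ`. -/
theorem centralizer_x0 (f : ℝ → ℝ) (hf : IsPL2 0 1 f) :
    (∀ α ∈ Set.Icc (0:ℝ) 1, f (x₀ α) = x₀ (f α)) ↔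
      ∃ m : ℤ, Set.EqOn f ⇑(x₀ ^ m) (Set.Icc (0:ℝ) 1) := by
  obtain ⟨hb, hm, n, hn, t, ht0, htn, hlt, -, haff⟩ := hf
  obtain ⟨hf0, hf1⟩ := endpoints_fixed hb hm
  constructor
  · intro hcomm
    obtain ⟨s, v, hs⟩ := haff 0 hn
    have ht1 : 0 < t 1 := by simpa [ht0] using hlt 0 hn
    rw [ht0, zero_add] at hs
    have hv : v = 0 := by
      have := hs 0 ⟨le_rfl, ht1.le⟩
      rw [hf0] at this; linarith
    subst hv
    obtain ⟨ε, hε, hgerm⟩ := x0_zpow_germ s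
    have hpow : ∀ k : ℕ, ∀ β ∈ Set.Icc (0:ℝ) 1, f ((x₀ ^ k) β) = (x₀ ^ k) (f β) := by
      intro k β hβ
      induction k with
      | zero => simp
      | succ k ih =>
        rw [pow_succ', Equiv.Perm.mul_apply, Equiv.Perm.mul_apply,
          hcomm _ (x0_pow_mem hβ k), ih]
    refine ⟨s, fun α hα => ?_⟩
    rcases hα.2.lt_or_eq with h1 | rfl
    · obtain ⟨k, β, hβ0, hβ, rfl⟩ :=
        exists_small_preimage (ε := min (min ε (t 1)) 1) (by positivity) hα.1 h1
      simp only [le_min_iff] at hβ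
      rw [hpow k β ⟨hβ0, hβ.2⟩, hs β ⟨hβ0, hβ.1.2⟩, add_zero, ← hgerm β hβ0 hβ.1.1,
        ← Equiv.Perm.mul_apply, ← Equiv.Perm.mul_apply, ← zpow_natCast, zpow_mul_comm]
    · rw [hf1, x0_zpow_one]
  · rintro ⟨m, h⟩ α hα
    rw [h (x0_mem hα), h hα, ← Equiv.Perm.mul_apply, ← Equiv.Perm.mul_apply,
      ← zpow_add_one, ← zpow_one_add, add_comm]
end
end

section
/- For every integer k, the conjugate gₖ = a⁻ᵏbaᵏ satisfies gₖ(α) > α for all α in its support Sₖ = (x₀²ᵏ(1/2), x₀²ᵏ⁺²(1/2)), and the right derivative of gₖ at the left endpoint x₀²ᵏ(1/2) of Sₖ equals 2 (i.e., gₖ restricted to the closure of Sₖ has initial slope 2). -/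
/-!
Conjugating by an increasing map carries the support and the sign of `g - id` along, so the
inequality reduces to `k = 0`: on `(1/2, 7/8)` the map `b` is `α ↦ 2α - 1/2` up to `5/8` and
`α ↦ α/2 + 7/16` afterwards, and both exceed `α` there (`lt_b`). Here `7/8 = x₀² (1/2)`.

For the slope, every power `f` of `x₀` is, to the right of each point, affine with some positive
slope `s` on a short interval. Near `p = f (1/2)` the conjugate `f b f⁻¹` is thus
`p + t ↦ 1/2 + t/s ↦ 1/2 + 2t/s ↦ p + 2t`: the slope of `f` cancels, whatever it is, leaving the
slope `2` of `b`. Both properties of `f` used here (monotonicity and right-local affineness) pass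
to products and inverses, so they define a subgroup `rightAffine` containing `x₀`, and
no induction on the exponent is needed.
-/


noncomputable section
set_option maxHeartbeats 2000000


/-- The group of strictly increasing bijections of `ℝ` that are affine with positive slope on a
nondegenerate closed interval to the right of each point. The slope and the length of the interval
may depend on the point. -/
def rightAffine : Subgroup (Equiv.Perm ℝ) where
  carrier := {f | StrictMono f ∧
    ∀ x, ∃ s > 0, ∃ δ > 0, ∀ t, 0 ≤ t → t ≤ δ → f (x + t) = f x + s * t}
  one_mem' := ⟨strictMono_id, fun x => ⟨1, one_pos, 1, one_pos, fun t _ _ => by simp⟩⟩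
  mul_mem' := by
    rintro f g ⟨hf, hf'⟩ ⟨hg, hg'⟩
    refine ⟨hf.comp hg, fun x => ?_⟩
    obtain ⟨s, hs, δ, hδ, h⟩ := hg' x
    obtain ⟨r, hr, ε, hε, h'⟩ := hf' (g x)
    refine ⟨r * s, by positivity, min δ (ε / s), by positivity, fun t ht0 ht => ?_⟩
    have h1 := h t ht0 (ht.trans (min_le_left _ _))
    have h2 : s * t ≤ ε := by
      rw [mul_comm]; exact (le_div_iff₀ hs).1 (ht.trans (min_le_right _ _))
    rw [Equiv.Perm.mul_apply, Equiv.Perm.mul_apply, h1, h' _ (by positivity) h2, mul_assoc]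
  inv_mem' := by
    rintro f ⟨hf, hf'⟩
    refine ⟨fun x y hxy => ?_, fun y => ?_⟩
    · rw [← hf.lt_iff_lt]
      simpa using hxy
    · obtain ⟨s, hs, δ, hδ, h⟩ := hf' (f⁻¹ y)
      refine ⟨s⁻¹, by positivity, s * δ, by positivity, fun t ht0 ht => ?_⟩
      have h1 := h (s⁻¹ * t) (by positivity) (by rwa [inv_mul_le_iff₀ hs])
      rw [Equiv.Perm.inv_eq_iff_eq, h1, show f (f⁻¹ y) = y from f.apply_symm_apply y,
        mul_inv_cancel_left₀ hs.ne']

lemma x₀_mem_rightAffine : x₀ ∈ rightAffine := by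
  refine ⟨fun x y hxy => ?_, fun x => ?_⟩
  · change x0fun x < x0fun y
    simp only [x0fun]
    split_ifs <;> linarith
  · change ∃ s > 0, ∃ δ > 0, ∀ t, 0 ≤ t → t ≤ δ → x0fun (x + t) = x0fun x + s * t
    -- While a breakpoint lies to the right of `x`, the point `x + δ` is the midpoint between `x`
    -- and the next one, so that `x + t` stays in the same linear piece.
    rcases lt_or_ge x 0 with h0 | h0
    · refine ⟨1, by norm_num, -x / 2, by linarith, fun t _ _ => ?_⟩
      simp only [x0fun]
      split_ifs <;> linarith
    rcases lt_or_ge x (1/4) with h1 | h1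
    · refine ⟨2, by norm_num, (1/4 - x) / 2, by linarith, fun t _ _ => ?_⟩
      simp only [x0fun]
      split_ifs <;> linarith
    rcases lt_or_ge x (1/2) with h2 | h2
    · refine ⟨1, by norm_num, (1/2 - x) / 2, by linarith, fun t _ _ => ?_⟩
      simp only [x0fun]
      split_ifs <;> linarith
    rcases lt_or_ge x 1 with h3 | h3
    · refine ⟨1/2, by norm_num, (1 - x) / 2, by linarith, fun t _ _ => ?_⟩
      simp only [x0fun]
      split_ifs <;> linarith
    · refine ⟨1, by norm_num, 1, by norm_num, fun t _ _ => ?_⟩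
      simp only [x0fun]
      split_ifs <;> linarith

lemma b_of_le {x : ℝ} (h1 : 1/2 ≤ x) (h2 : x ≤ 5/8) : b x = 2 * x - 1/2 := by
  have e1 : x1fun x = 2 * x - 1/2 := by
    simp only [x1fun]; split_ifs <;> linarith
  -- `2x - 1/2 ≤ 3/4` lies to the left of the support of `x₂`.
  have e2 : x0inv (2 * x - 1/2) ≤ 1/2 := by
    simp only [x0inv]; split_ifs <;> linarith
  have e3 : x1inv (x0inv (2 * x - 1/2)) = x0inv (2 * x - 1/2) := if_pos e2
  rw [b_apply, e1, e3]
  exact x₀.apply_symm_apply _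

lemma b_of_ge {x : ℝ} (h1 : 5/8 < x) (h2 : x ≤ 7/8) : b x = x / 2 + 7/16 := by
  rw [b_apply]
  rcases le_or_gt x (3/4) with h | h
  · have e1 : x1fun x = x + 1/8 := by
      simp only [x1fun]; split_ifs <;> linarith
    have e2 : x0inv (x + 1/8) = 2 * x - 3/4 := by
      simp only [x0inv]; split_ifs <;> linarith
    have e3 : x1inv (2 * x - 3/4) = x - 1/8 := by
      simp only [x1inv]; split_ifs <;> linarith
    rw [e1, e2, e3]
    simp only [x0fun]; split_ifs <;> linarith
  · have e1 : x1fun x = x / 2 + 1/2 := by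
      simp only [x1fun]; split_ifs <;> linarith
    have e2 : x0inv (x / 2 + 1/2) = x := by
      simp only [x0inv]; split_ifs <;> linarith
    have e3 : x1inv x = x - 1/8 := by
      simp only [x1inv]; split_ifs <;> linarith
    rw [e1, e2, e3]
    simp only [x0fun]; split_ifs <;> linarith

lemma lt_b_s11 {x : ℝ} (h1 : 1/2 < x) (h2 : x < 7/8) : x < b x := by
  rcases le_or_gt x (5/8) with h | h
  · rw [b_of_le h1.le h]; linarith
  · rw [b_of_ge h h2.le]; linarith

lemma x₀_sq_half : (x₀ ^ (2 : ℤ)) (1/2 : ℝ) = 7/8 := by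
  change x0fun (x0fun (1/2)) = 7/8
  norm_num [x0fun]

lemma c_apply (k : ℤ) (x : ℝ) : c k x = (x₀ ^ (2*k)) (b ((x₀ ^ (2*k))⁻¹ x)) := by
  rw [c, zpow_neg]; rfl

/-- for every `k ∈ ℤ`, the conjugate `gₖ = a⁻ᵏbaᵏ` satisfies
`gₖ(α) > α` for all `α` in its support `Sₖ = (x₀²ᵏ(1/2), x₀²ᵏ⁺²(1/2))`, and
the right derivative of `gₖ` at the left endpoint `x₀²ᵏ(1/2)` of `Sₖ` equals
`2` (initial slope `2` on the closure of `Sₖ`). -/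
theorem conjugate_initial_slope (k : ℤ) :
    (∀ α ∈ Set.Ioo ((x₀ ^ (2*k)) (1/2 : ℝ)) ((x₀ ^ (2*k + 2)) (1/2 : ℝ)),
        α < c k α) ∧
    HasDerivWithinAt (⇑(c k)) 2 (Set.Ici ((x₀ ^ (2*k)) (1/2 : ℝ)))
      ((x₀ ^ (2*k)) (1/2 : ℝ)) := by
  obtain ⟨hmono, haff⟩ := rightAffine.zpow_mem x₀_mem_rightAffine (2*k)
  have hc := c_apply k
  rw [zpow_add, Equiv.Perm.mul_apply, x₀_sq_half]
  generalize x₀ ^ (2*k) = f at hmono haff hc ⊢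
  constructor
  · rintro α ⟨h1, h2⟩
    obtain ⟨β, rfl⟩ := f.surjective α
    rw [hc, show f⁻¹ (f β) = β from f.symm_apply_apply β]
    exact hmono (lt_b_s11 (hmono.lt_iff_lt.1 h1) (hmono.lt_iff_lt.1 h2))
  · obtain ⟨s, hs, δ, hδ, h⟩ := haff (1/2)
    -- The bounds `δ / 2` and `1/8` keep both `1/2 + u` and `b (1/2 + u) = 1/2 + 2u` where `f` is
    -- known to be affine, and `1/2 + u` in the first linear piece of `b`.
    have key : ∀ u, 0 ≤ u → u ≤ min (δ / 2) (1/8) →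
        c k (f (1/2) + s * u) = f (1/2) + 2 * (s * u) := by
      intro u hu0 hu
      have hu1 : u ≤ δ / 2 := hu.trans (min_le_left _ _)
      have hu2 : u ≤ 1/8 := hu.trans (min_le_right _ _)
      rw [← h u hu0 (by linarith), hc, show f⁻¹ (f (1/2 + u)) = 1/2 + u from f.symm_apply_apply _,
        b_of_le (by linarith) (by linarith),
        show 2 * (1/2 + u) - 1/2 = 1/2 + 2 * u by ring, h _ (by linarith) (by linarith)]
      ring
    have hm : 0 < s * min (δ / 2) (1/8) := by positivity
    have hd : HasDerivWithinAt (fun y => f (1/2) + 2 * (y - f (1/2))) 2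
        (Set.Ici (f (1/2))) (f (1/2)) := by
      simpa using ((((hasDerivAt_id (f (1/2))).sub_const (f (1/2))).const_mul 2).const_add
        (f (1/2))).hasDerivWithinAt
    refine hd.congr_of_eventuallyEq ?_ ?_
    · filter_upwards [Icc_mem_nhdsGE (lt_add_of_pos_right (f (1/2)) hm)] with y hy
      have := key ((y - f (1/2)) / s) (div_nonneg (by linarith [hy.1]) hs.le)
        ((div_le_iff₀ hs).2 (by linarith [hy.2]))
      rwa [mul_div_cancel₀ _ hs.ne', add_sub_cancel] at this
    · simpa using key 0 le_rfl (by positivity)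
end
end

section
/- The group G = ⟨a, b⟩ is not virtually abelian: every normal abelian subgroup of G has infinite index in G. Equivalently, for every surjective group homomorphism φ from G onto a finite group, the kernel of φ is nonabelian. -/
/-! The map `b` is the identity on `[7/8, ∞)` and moves `5/8` strictly to the right, while `a` maps
`[1/2, ∞)` into `[7/8, ∞)`. Hence for `n ≥ 1` the power `b ^ n` fixes `a ^ n (5/8)` but not `5/8`,
so `a ^ n` and `b ^ n` do not commute (`pow_not_comm`). A normal subgroup of finite index `n`
contains `a ^ n` and `b ^ n`, so it is not abelian (`index_eq_zero`). The kernel of a homomorphism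
to a finite group is such a subgroup. -/

noncomputable section
set_option maxHeartbeats 2000000


/-- `a` pushes `[1/2, ∞)` off the support `(1/2, 7/8)` of `b`, because `a (1/2) = 7/8`. -/
lemma a_ge {x : ℝ} (hx : 1/2 ≤ x) : 7/8 ≤ a x := by
  have h : ∀ y : ℝ, 1/2 ≤ y → (3/4 ≤ x0fun y ∧ (3/4 ≤ y → 7/8 ≤ x0fun y)) := by
    intro y hy
    refine ⟨?_, fun hy' => ?_⟩ <;> simp only [x0fun] <;> split_ifs <;> linarith
  have h1 := (h x hx).1
  have h2 : 7/8 ≤ x0fun (x0fun x) := (h _ (by linarith)).2 h1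
  exact h2

lemma b_fix {x : ℝ} (hx : 7/8 ≤ x) : b x = x := by
  rw [b_apply]
  rcases le_or_gt x 1 with h1 | h1
  · have e1 : x1fun x = x/2 + 1/2 := by simp only [x1fun]; split_ifs <;> linarith
    have e2 : x0inv (x/2 + 1/2) = x := by simp only [x0inv]; split_ifs <;> linarith
    have e3 : x1inv x = 2*x - 1 := by simp only [x1inv]; split_ifs <;> linarith
    have e4 : x0fun (2*x - 1) = x := by simp only [x0fun]; split_ifs <;> linarith
    rw [e1, e2, e3, e4]
  · have e1 : x1fun x = x := by simp only [x1fun]; split_ifs <;> linarith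
    have e2 : x0inv x = x := by simp only [x0inv]; split_ifs <;> linarith
    have e3 : x1inv x = x := by simp only [x1inv]; split_ifs <;> linarith
    have e4 : x0fun x = x := by simp only [x0fun]; split_ifs <;> linarith
    rw [e1, e2, e3, e4]

/-- `b` moves `5/8` to `3/4` and moves no point of `[3/4, ∞)` below `3/4`. -/
lemma b_ge {x : ℝ} (hx : 5/8 ≤ x) : 3/4 ≤ b x := by
  rw [b_apply]
  have h1 : 3/4 ≤ x1fun x := by simp only [x1fun]; split_ifs <;> linarith
  have h2 : 1/2 ≤ x0inv (x1fun x) := by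
    generalize x1fun x = y at *
    simp only [x0inv]; split_ifs <;> linarith
  have h3 : 1/2 ≤ x1inv (x0inv (x1fun x)) := by
    generalize x0inv (x1fun x) = y at *
    simp only [x1inv]; split_ifs <;> linarith
  generalize x1inv (x0inv (x1fun x)) = y at *
  simp only [x0fun]; split_ifs <;> linarith

lemma a_pow_ge (n : ℕ) {x : ℝ} (hx : 1/2 ≤ x) : 7/8 ≤ (a ^ (n + 1)) x := by
  induction n with
  | zero => simpa using a_ge hx
  | succ k ih =>
    rw [pow_succ', Equiv.Perm.mul_apply]
    exact a_ge (by linarith)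

lemma b_pow_ge (n : ℕ) : 3/4 ≤ (b ^ (n + 1)) (5/8) := by
  induction n with
  | zero => simpa using b_ge le_rfl
  | succ k ih =>
    rw [pow_succ', Equiv.Perm.mul_apply]
    exact b_ge (by linarith)

lemma b_pow_fix (n : ℕ) {x : ℝ} (hx : 7/8 ≤ x) : (b ^ n) x = x := by
  induction n with
  | zero => rfl
  | succ k ih => rw [pow_succ', Equiv.Perm.mul_apply, ih, b_fix hx]

lemma pow_not_comm {n : ℕ} (hn : n ≠ 0) : a ^ n * b ^ n ≠ b ^ n * a ^ n := by
  obtain ⟨m, rfl⟩ := Nat.exists_eq_succ_of_ne_zero hn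
  intro h
  have h1 := congrArg (fun f : Equiv.Perm ℝ => f (5/8)) h
  simp only [Equiv.Perm.mul_apply, Nat.succ_eq_add_one] at h1
  rw [b_pow_fix _ (a_pow_ge m (by norm_num))] at h1
  have h2 := (a ^ (m + 1)).injective h1
  have h3 := b_pow_ge m
  rw [h2] at h3
  norm_num at h3

lemma index_eq_zero (H : Subgroup (Subgroup.closure ({a, b} : Set (Equiv.Perm ℝ))))
    (hN : H.Normal) (hc : ∀ x y : H, x * y = y * x) : H.index = 0 := by
  by_contra hn
  have ha := H.pow_index_mem ⟨a, Subgroup.subset_closure (by simp)⟩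
  have hb := H.pow_index_mem ⟨b, Subgroup.subset_closure (by simp)⟩
  have h := hc ⟨_, ha⟩ ⟨_, hb⟩
  refine pow_not_comm hn ?_
  simpa using congrArg (fun z : H => ((z : Subgroup.closure ({a, b} : Set (Equiv.Perm ℝ))) :
    Equiv.Perm ℝ)) h

/-- `G = ⟨a, b⟩` is not virtually abelian: every normal abelian
subgroup of `G` has infinite index (index `0` in Mathlib's convention), and,
equivalently, every surjective homomorphism from `G` onto a finite group has
nonabelian kernel. -/
theorem G_not_virtually_abelian :
    (∀ H : Subgroup (Subgroup.closure ({a, b} : Set (Equiv.Perm ℝ))),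
        H.Normal → (∀ x y : H, x * y = y * x) → H.index = 0) ∧
    (∀ (K : Type) [Group K], Finite K →
        ∀ φ : (Subgroup.closure ({a, b} : Set (Equiv.Perm ℝ))) →* K,
          Function.Surjective φ → ¬ (∀ x y : φ.ker, x * y = y * x)) := by
  refine ⟨index_eq_zero, ?_⟩
  intro K _ _ φ _ hc
  exact Subgroup.FiniteIndex.index_ne_zero (index_eq_zero φ.ker inferInstance hc)
end
end
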